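/- The conjunctive form of modus ponens, (p ∧ (p → q)) → q, for distinct atoms p and q, is not N-valid. -/

import Mathlib

/-! ## Dialogical logic: formulas, statements, moves -/

/-- Propositional formulas, built from atoms (indexed by `ℕ`) and `¬`, `∧`, `∨`, `→`. -/
inductive Formula : Type
  | atom : ℕ → Formula
  | neg : Formula → Formula
  | conj : Formula → Formula → Formula
  | disj : Formula → Formula → Formula
  | impl : Formula → Formula → Formula
  deriving DecidableEq, Inhabited

/-- Statements: formulas together with the three symbolic attacks `∧_L`, `∧_R` and `?`. -/
inductive Statement : Type
  | form : Formula → Statement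
  | conjL : Statement  -- the symbolic attack ∧_L
  | conjR : Statement  -- the symbolic attack ∧_R
  | question : Statement   -- the symbolic attack ?
  deriving DecidableEq, Inhabited

/-- A formula is atomic iff it is an atom. -/
def Formula.isAtomic : Formula → Prop
  | .atom _ => True
  | _ => False

/-- A move of a dialogue: a statement together with a reference.  The reference is
`none` for the initial move, `some (m, true)` for an attack on the assertion made at
move `m`, and `some (m, false)` for a defense against the attack made at move `m`. -/
structure Move : Type where
  stmt : Statement
  ref : Option (ℕ × Bool)
  deriving DecidableEq, Inhabited

/-! ## Particle rules -/

/-- Particle rules, attacks: `Attacks a φ` holds when the statement `a` is an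
admissible attack against the assertion `φ`. -/
inductive Attacks : Statement → Formula → Prop
  | conjL (φ ψ : Formula) : Attacks .conjL (.conj φ ψ)
  | conjR (φ ψ : Formula) : Attacks .conjR (.conj φ ψ)
  | disj (φ ψ : Formula) : Attacks .question (.disj φ ψ)
  | impl (φ ψ : Formula) : Attacks (.form φ) (.impl φ ψ)
  | neg (φ : Formula) : Attacks (.form φ) (.neg φ)

/-- Particle rules, defenses: `Defends s a φ` holds when the statement `s` is an
admissible defense of the assertion `φ` against the attack `a`.  (A negation admits
no defense.) -/
inductive Defends : Statement → Statement → Formula → Prop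
  | conjL (φ ψ : Formula) : Defends (.form φ) .conjL (.conj φ ψ)
  | conjR (φ ψ : Formula) : Defends (.form ψ) .conjR (.conj φ ψ)
  | disjL (φ ψ : Formula) : Defends (.form φ) .question (.disj φ ψ)
  | disjR (φ ψ : Formula) : Defends (.form ψ) .question (.disj φ ψ)
  | impl (φ ψ : Formula) : Defends (.form ψ) (.form φ) (.impl φ ψ)

/-! ## Dialogues

A (finite stage of a) dialogue is modelled as a list of moves; the move at index `i`
is the `i`-th move, made by Proponent P if `i` is even and by Opponent O if `i` is odd. -/

/-- The skeletal dialogue conditions: move 0 is an assertion of a formula with no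
reference, and every later move is an attack on, or a defense against, a specified
earlier move of the other player, in accordance with the particle rules; only
non-atomic assertions may be attacked. -/
def IsDialogue (d : List Move) : Prop :=
  (∀ _ : 0 < d.length, d[0]!.ref = none ∧ ∃ φ : Formula, d[0]!.stmt = .form φ) ∧
  (∀ i : ℕ, 0 < i → i < d.length →
    ∃ (m : ℕ) (z : Bool), d[i]!.ref = some (m, z) ∧ m < i ∧ m % 2 ≠ i % 2 ∧
      (z = true →
        ∃ φ : Formula, d[m]!.stmt = .form φ ∧ ¬ φ.isAtomic ∧ Attacks d[i]!.stmt φ) ∧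
      (z = false →
        ∃ (k : ℕ) (φ : Formula), d[m]!.ref = some (k, true) ∧ k < m ∧
          d[k]!.stmt = .form φ ∧ Defends d[i]!.stmt d[m]!.stmt φ))

/-- Rule D10: P may assert an atomic formula only if O has asserted it earlier. -/
def RuleD10 (d : List Move) : Prop :=
  ∀ i < d.length, i % 2 = 0 → ∀ a : ℕ, d[i]!.stmt = .form (.atom a) →
    ∃ j < i, j % 2 = 1 ∧ d[j]!.stmt = .form (.atom a)

/-- Rule D13: each P-assertion may be attacked at most once. -/
def RuleD13 (d : List Move) : Prop :=
  ∀ m : ℕ, m % 2 = 0 → ∀ i < d.length, ∀ j < d.length,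
    d[i]!.ref = some (m, true) → d[j]!.ref = some (m, true) → i = j

/-- Rule E: O may only react (attack or defend) against the immediately preceding
P-move. -/
def RuleE (d : List Move) : Prop :=
  ∀ i < d.length, i % 2 = 1 → ∃ z : Bool, d[i]!.ref = some (i - 1, z)

/-- The rule set N = {D10, D13}. -/
def NRules (d : List Move) : Prop := RuleD10 d ∧ RuleD13 d

/-- The rule set CL = {D10, D13, E}. -/
def CLRules (d : List Move) : Prop := RuleD10 d ∧ RuleD13 d ∧ RuleE d

/-- A dialogue commences with `φ` when its initial move is P's assertion of `φ`. -/
def CommencesWith (φ : Formula) (d : List Move) : Prop :=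
  0 < d.length ∧ d[0]!.stmt = .form φ

/-- An `S`-dialogue for `φ` (for a rule set `S`): a dialogue commencing with `φ`
that obeys the structural rules `S`.  These are exactly the branches (identified
with their underlying move sequences) of the `S`-dialogue tree for `φ`. -/
def SDialogueFor (S : List Move → Prop) (φ : Formula) (d : List Move) : Prop :=
  IsDialogue d ∧ S d ∧ CommencesWith φ d

/-- P wins a finite `S`-dialogue for `φ`: it ends with a P-move (the last index,
`d.length - 1`, is even, i.e. `d.length` is odd) and it cannot be extended by any
legal further (O-)move. -/
def WinsFor (S : List Move → Prop) (φ : Formula) (d : List Move) : Prop :=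
  SDialogueFor S φ d ∧ d.length % 2 = 1 ∧ ∀ m : Move, ¬ SDialogueFor S φ (d ++ [m])

/-- An `S`-winning strategy for P for `φ`, modelled as a set `T` of `S`-dialogues for
`φ`: the nodes of a rooted subtree of the `S`-dialogue tree for `φ`, each node being
identified with the dialogue leading from the root to it.  The conditions state that
`T` is a nonempty, prefix-closed set of `S`-dialogues for `φ` (hence a rooted subtree
of the `S`-dialogue tree with the same root), that every branch of `T` is a finite
`S`-dialogue won by P (leaves are wins for P, and there is no infinite branch), that
every node at odd depth (an O-move) has exactly one child, and that every node at
even depth (a P-move) has the same children in `T` as in the full dialogue tree. -/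
structure IsWinningStrategy (S : List Move → Prop) (φ : Formula) (T : Set (List Move)) : Prop where
  nonempty : T.Nonempty
  dialogues : ∀ d ∈ T, SDialogueFor S φ d
  prefix_closed : ∀ d ∈ T, ∀ e : List Move, e <+: d → 0 < e.length → e ∈ T
  leaf_wins : ∀ d ∈ T, (∀ m : Move, d ++ [m] ∉ T) → WinsFor S φ d
  no_infinite_branch : ∀ f : ℕ → Move, ∃ n : ℕ, 0 < n ∧ (List.ofFn fun i : Fin n => f i) ∉ T
  odd_unique_child : ∀ d ∈ T, 0 < d.length → d.length % 2 = 0 → ∃! m : Move, d ++ [m] ∈ T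
  even_all_children : ∀ d ∈ T, d.length % 2 = 1 →
    ∀ m : Move, SDialogueFor S φ (d ++ [m]) → d ++ [m] ∈ T

/-- `φ` is `S`-valid iff P has an `S`-winning strategy for `φ`. -/
def SValid (S : List Move → Prop) (φ : Formula) : Prop :=
  ∃ T : Set (List Move), IsWinningStrategy S φ T

/-- `φ` is N-valid (`⊨_N φ`) iff P has an N-winning strategy for `φ`. -/
def NValid (φ : Formula) : Prop := SValid NRules φ

theorem getElem!_append_one_lt (d : List Move) (m : Move) (i : ℕ) (h : i < d.length) :
    (d ++ [m])[i]! = d[i]! := by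
  have h2 : i < (d ++ [m]).length := by simp; omega
  rw [getElem!_pos _ i h2, getElem!_pos d i h, List.getElem_append_left h]

theorem getElem!_append_one_eq (d : List Move) (m : Move) :
    (d ++ [m])[d.length]! = m := by
  simp

/-- Opponent may always repeat a defense against Proponent's attack at move 2. -/
theorem extend_by_defense (φ χ : Formula) (d : List Move) (s : Statement)
    (hd : SDialogueFor NRules φ d) (hodd : d.length % 2 = 1) (h3 : 3 ≤ d.length)
    (h1 : d[1]!.stmt = .form χ) (h2 : d[2]!.ref = some (1, true))
    (hs : Defends s d[2]!.stmt χ) :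
    SDialogueFor NRules φ (d ++ [⟨s, some (2, false)⟩]) := by
  obtain ⟨⟨hA, hB⟩, ⟨h10, h13⟩, hC, hC'⟩ := hd
  set m : Move := ⟨s, some (2, false)⟩ with hm
  have lt := getElem!_append_one_lt d m
  have eq := getElem!_append_one_eq d m
  have len : (d ++ [m]).length = d.length + 1 := by simp
  refine ⟨⟨?_, ?_⟩, ⟨?_, ?_⟩, ?_, ?_⟩
  · intro _
    rw [lt 0 hC]
    exact hA hC
  · intro i hi hil
    rw [len] at hil
    rcases Nat.lt_succ_iff_lt_or_eq.mp hil with h | h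
    · obtain ⟨k, z, hr, hk, hp, ha, hdd⟩ := hB i hi h
      refine ⟨k, z, ?_, hk, hp, ?_, ?_⟩
      · rw [lt i h]; exact hr
      · intro hz
        rw [lt i h, lt k (by omega)]
        exact ha hz
      · intro hz
        obtain ⟨l, ψ, e1, e2, e3, e4⟩ := hdd hz
        refine ⟨l, ψ, ?_, e2, ?_, ?_⟩
        · rw [lt k (by omega)]; exact e1
        · rw [lt l (by omega)]; exact e3
        · rw [lt i h, lt k (by omega)]; exact e4
    · subst h
      refine ⟨2, false, ?_, by omega, by omega, by simp, ?_⟩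
      · rw [eq]
      · intro _
        refine ⟨1, χ, ?_, by omega, ?_, ?_⟩
        · rw [lt 2 (by omega)]; exact h2
        · rw [lt 1 (by omega)]; exact h1
        · rw [eq, lt 2 (by omega)]; exact hs
  · intro i hi he a ha
    rw [len] at hi
    have h : i < d.length := by omega
    rw [lt i h] at ha
    obtain ⟨j, hj, hj1, hj2⟩ := h10 i h he a ha
    exact ⟨j, hj, hj1, by rw [lt j (by omega)]; exact hj2⟩
  · intro k hk i hi j hj hri hrj
    rw [len] at hi hj
    have key : ∀ i, i < d.length + 1 → (d ++ [m])[i]!.ref = some (k, true) → i < d.length := by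
      intro i hi hr
      rcases Nat.lt_succ_iff_lt_or_eq.mp hi with h | h
      · exact h
      · subst h
        rw [eq] at hr
        simp [hm] at hr
    have hi' := key i hi hri
    have hj' := key j hj hrj
    rw [lt i hi'] at hri
    rw [lt j hj'] at hrj
    exact h13 k hk i hi' j hj' hri hrj
  · omega
  · rw [lt 0 hC]; exact hC'

/-- A winning strategy contains no set of nodes closed under taking some child. -/
theorem no_unending (S : List Move → Prop) (φ : Formula) (T : Set (List Move))
    (hT : IsWinningStrategy S φ T) (Q : List Move → Prop) (hQT : ∀ d, Q d → d ∈ T)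
    (step : ∀ d, Q d → ∃ m, Q (d ++ [m])) (d₀ : List Move) (h0 : Q d₀) : False := by
  classical
  choose! g hg using step
  let e : ℕ → List Move := fun n => Nat.rec d₀ (fun _ d => d ++ [g d]) n
  have es : ∀ n, e (n + 1) = e n ++ [g (e n)] := fun n => rfl
  have eQ : ∀ n, Q (e n) := by
    intro n
    induction n with
    | zero => exact h0
    | succ n ih => rw [es]; exact hg _ ih
  have elen : ∀ n, (e n).length = d₀.length + n := by
    intro n
    induction n with
    | zero => rfl
    | succ n ih => rw [es]; simp [ih]; omega
  have epre : ∀ n k, e n <+: e (n + k) := by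
    intro n k
    induction k with
    | zero => exact List.prefix_rfl
    | succ k ih => exact ih.trans ⟨_, (es (n + k)).symm⟩
  clear_value e
  obtain ⟨n, hn, hnot⟩ := hT.no_infinite_branch (fun i => (e (i + 1))[i]!)
  apply hnot
  refine hT.prefix_closed (e n) (hQT _ (eQ n)) _ ?_ (by simpa using hn)
  have : (List.ofFn fun i : Fin n => (e ((i : ℕ) + 1))[(i : ℕ)]!) = (e n).take n := by
    apply List.ext_getElem
    · simp [elen]
    · intro i hi1 hi2
      have hin : i < n := by simpa using hi1
      have hl : i < (e (i + 1)).length := by have := elen (i + 1); omega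
      rw [List.getElem_ofFn, List.getElem_take]
      simp only
      rw [getElem!_pos _ i hl]
      have hp := epre (i + 1) (n - (i + 1))
      rw [show i + 1 + (n - (i + 1)) = n by omega] at hp
      exact hp.getElem hl
  rw [this]
  exact List.take_prefix _ _

/-- The conjunctive form of modus ponens `(p ∧ (p → q)) → q`, for
distinct atoms `p` and `q`, is not N-valid. -/
theorem conjunctive_modus_ponens_not_N_valid (p q : ℕ) (hpq : p ≠ q) :
    ¬ NValid (Formula.impl
        (Formula.conj (Formula.atom p) (Formula.impl (Formula.atom p) (Formula.atom q)))
        (Formula.atom q)) := by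
  rintro ⟨T, hT⟩
  set χ : Formula := Formula.conj (Formula.atom p) (Formula.impl (Formula.atom p) (Formula.atom q))
    with hχ
  set φ : Formula := Formula.impl χ (Formula.atom q) with hφ
  -- the root
  have root : [(⟨.form φ, none⟩ : Move)] ∈ T := by
    obtain ⟨d, hd⟩ := hT.nonempty
    obtain ⟨⟨hA, -⟩, -, hC, hC'⟩ := hT.dialogues d hd
    cases d with
    | nil => simp at hC
    | cons a l =>
      have hr := (hA hC).1
      have ha : a = ⟨.form φ, none⟩ := by
        cases a
        simp at hr hC'
        simp [hr, hC']
      subst ha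
      exact hT.prefix_closed _ hd _ ⟨l, rfl⟩ (by simp)
  -- Opponent attacks
  have node1 : [(⟨.form φ, none⟩ : Move), ⟨.form χ, some (0, true)⟩] ∈ T := by
    refine hT.even_all_children _ root rfl _ ⟨⟨?_, ?_⟩, ⟨?_, ?_⟩, ?_, ?_⟩
    · intro _
      exact ⟨rfl, φ, rfl⟩
    · intro i hi hil
      obtain rfl : i = 1 := by simp at hil; omega
      refine ⟨0, true, rfl, by omega, by omega, ?_, by simp⟩
      intro _
      exact ⟨φ, rfl, by simp [hφ, Formula.isAtomic], Attacks.impl _ _⟩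
    · intro i hi he a ha
      obtain rfl : i = 0 := by simp at hi; omega
      simp [hφ] at ha
    · intro k _ i hi j hj hri hrj
      simp at hi hj
      interval_cases i <;> interval_cases j <;>
        first | rfl | (exfalso; clear * - hri; simp at hri; done) | (exfalso; clear * - hrj; simp at hrj; done)
    · simp
    · rfl
  obtain ⟨m, hm, -⟩ := hT.odd_unique_child _ node1 (by simp) (by simp)
  have node2 : [(⟨.form φ, none⟩ : Move), ⟨.form χ, some (0, true)⟩, m] ∈ T := hm
  have hdial := hT.dialogues _ node2
  have hmove : m.ref = some (1, true) ∧ ∃ s, Defends s m.stmt χ := by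
    obtain ⟨⟨-, hB⟩, ⟨h10, -⟩, -⟩ := hdial
    obtain ⟨k, z, hr, hk, hp, ha, hd⟩ := hB 2 (by omega) (by simp)
    obtain rfl : k = 1 := by omega
    cases z with
    | true =>
      refine ⟨by simpa using hr, ?_⟩
      obtain ⟨ψ, e1, -, e3⟩ := ha rfl
      have e1' : χ = ψ := by simpa using e1
      have e3' : Attacks m.stmt ψ := by simpa using e3
      rw [← e1', hχ] at e3'
      generalize m.stmt = t at e3'
      cases e3' with
      | conjL => exact ⟨_, Defends.conjL _ _⟩
      | conjR => exact ⟨_, Defends.conjR _ _⟩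
    | false =>
      exfalso
      obtain ⟨l, ψ, e1, e2, e3, e4⟩ := hd rfl
      obtain rfl : l = 0 := by omega
      have e3' : φ = ψ := by simpa using e3
      have e4' : Defends m.stmt (.form χ) ψ := by simpa using e4
      rw [← e3', hφ] at e4'
      have hs : m.stmt = .form (.atom q) := by
        generalize m.stmt = t at e4'
        cases e4' with
        | impl => rfl
      obtain ⟨j, hj, hj1, hj2⟩ := h10 2 (by simp) rfl q (by simpa using hs)
      obtain rfl : j = 1 := by omega
      simp [hχ] at hj2
  obtain ⟨hmr, s, hs⟩ := hmove
  refine no_unending NRules φ T hT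
    (fun d => d ∈ T ∧ 3 ≤ d.length ∧ d[1]!.stmt = .form χ ∧ d[2]! = m)
    (fun d h => h.1) ?_ _ ⟨node2, by simp, rfl, rfl⟩
  rintro d ⟨hd, h3, h1, h2⟩
  have hchild : ∃ m', d ++ [m'] ∈ T := by
    rcases Nat.mod_two_eq_zero_or_one d.length with h | h
    · obtain ⟨m', hm', -⟩ := hT.odd_unique_child d hd (by omega) h
      exact ⟨m', hm'⟩
    · exact ⟨_, hT.even_all_children d hd h _
        (extend_by_defense φ χ d s (hT.dialogues d hd) h h3 h1 (by rw [h2, hmr]) (by rw [h2]; exact hs))⟩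
  obtain ⟨m', hm'⟩ := hchild
  refine ⟨m', hm', by simp; omega, ?_, ?_⟩
  · rw [getElem!_append_one_lt d m' 1 (by omega)]; exact h1
  · rw [getElem!_append_one_lt d m' 2 (by omega)]; exact h2
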